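/- Every binary form of degree d has Waring rank at most d, and this bound is achieved: the form x^{d−1} y has rank exactly d. In particular, the maximal Waring rank among binary forms of degree d is exactly d. -/

import Mathlib

open MvPolynomial Finset

noncomputable section

def linForm (K : Type) [Field K] (c : Fin 2 → K) : MvPolynomial (Fin 2) K :=
  C (c 0) * X 0 + C (c 1) * X 1

/-- `α` is not a scalar multiple of `β` (for nonzero vectors: distinct points of `ℙ¹`). -/
def NonProp (K : Type) [Field K] (α β : Fin 2 → K) : Prop := ∀ t : K, α ≠ t • β

/-- The Waring rank of a binary form: the least `r` such that `q` is a sum of `r`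
`d`-th powers of linear forms. -/
def waringRank (K : Type) [Field K] (d : ℕ) (q : MvPolynomial (Fin 2) K) : ℕ :=
  sInf {r : ℕ | ∃ L : Fin r → Fin 2 → K, q = ∑ i, linForm K (L i) ^ d}

/-!
*Upper bound.* Write `q = ∑ (d choose k) a_k x^k y^(d-k)` and let `φ` be the linear functional on
univariate polynomials with `φ(x^k) = a_k`. If a product of `d` distinct linear factors `x - t_i`
lies in the kernel of `φ`, then Lagrange interpolation at the `t_i` gives `φ(p) = ∑ c_i p(t_i)` for
all `p` of degree at most `d`; that is, `a_k = ∑ c_i t_i^k`, so `q = ∑ c_i (t_i x + y)^d`, and the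
`c_i` are `d`-th powers. To find the `t_i`, choose all but one of them generically: then `φ` does
not vanish on their product `h`, and `φ((x - s) h) = 0` is a linear equation for the last point `s`,
which differs from every `t_i` as soon as `φ((x - t_i) h) ≠ 0`. This works unless `a_k = 0` for all
`k < d`, where `q` is a multiple of `x^d`.

*Lower bound.* Differentiating `x^(d-1) y = ∑ L_i^d` in `y` writes `x^(d-1)` as a combination of
the `L_i^(d-1)` with `L_i` not proportional to `x`. If there are fewer than `d` of these,
differentiating successively along the zero of each `L_i` annihilates the right-hand side but not
`x^(d-1)`.
-/

open scoped Polynomial Nat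

theorem natCast_choose_ne_zero {R : Type*} [Semiring R] {d m k : ℕ} (hd : (d ! : R) ≠ 0)
    (hm : m ≤ d) (hk : k ≤ m) : (m.choose k : R) ≠ 0 := by
  have hchoose : m.choose k ∣ m ! := by
    rw [← Nat.choose_mul_factorial_mul_factorial hk, mul_assoc]
    exact dvd_mul_right _ _
  exact ne_zero_of_dvd_ne_zero hd
    (Nat.cast_dvd_cast (hchoose.trans (Nat.factorial_dvd_factorial hm)))

section MomentFunctional

/-- The linear functional on polynomials with prescribed moments: it sends `X ^ k` to `a k`. When
the `a k` are the coefficients of a binary form, divided by binomials, it is the apolarity pairing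
with that form, in an affine coordinate. -/
def momentFunctional {R : Type*} [CommSemiring R] (a : ℕ → R) : R[X] →ₗ[R] R :=
  Polynomial.lsum fun k => LinearMap.mulRight R (a k)

theorem momentFunctional_monomial {R : Type*} [CommSemiring R] (a : ℕ → R) (k : ℕ) (c : R) :
    momentFunctional a (Polynomial.monomial k c) = c * a k := by
  simp [momentFunctional]

theorem momentFunctional_X_pow {R : Type*} [CommSemiring R] (a : ℕ → R) (k : ℕ) :
    momentFunctional a (Polynomial.X ^ k) = a k := by
  rw [Polynomial.X_pow_eq_monomial, momentFunctional_monomial, one_mul]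

theorem momentFunctional_C_mul {R : Type*} [CommSemiring R] (a : ℕ → R) (c : R) (p : R[X]) :
    momentFunctional a (Polynomial.C c * p) = c * momentFunctional a p := by
  rw [← Polynomial.smul_eq_C_mul, map_smul, smul_eq_mul]

theorem map_momentFunctional {R S : Type*} [CommSemiring R] [CommSemiring S] (f : R →+* S)
    (a : ℕ → R) (p : R[X]) :
    f (momentFunctional a p) = momentFunctional (fun k => f (a k)) (p.map f) := by
  induction p using Polynomial.induction_on' with
  | add p q hp hq => simp only [map_add, Polynomial.map_add, hp, hq]
  | monomial k c => simp only [Polynomial.map_monomial, momentFunctional_monomial, map_mul]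

theorem momentFunctional_X_add_C_pow {R : Type*} [CommSemiring R] (a : ℕ → R) (b : R) (m : ℕ) :
    momentFunctional a ((Polynomial.X + Polynomial.C b) ^ m) =
      ∑ k ∈ range (m + 1), m.choose k * a k * b ^ (m - k) := by
  rw [add_pow, map_sum]
  refine sum_congr rfl fun k _ => ?_
  have hterm : (Polynomial.X ^ k * Polynomial.C b ^ (m - k) * (m.choose k : R[X])) =
      Polynomial.C (m.choose k * b ^ (m - k)) * Polynomial.X ^ k := by
    simp only [map_mul, map_pow, map_natCast]
    ring
  rw [hterm, momentFunctional_C_mul, momentFunctional_X_pow]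
  ring

theorem exists_momentFunctional_X_sub_C_pow_ne_zero {R : Type*} [CommRing R] [IsDomain R]
    [Infinite R] {a : ℕ → R} {m k : ℕ} (hk : k ≤ m) (ha : m.choose k * a k ≠ 0) :
    ∃ b, momentFunctional a ((Polynomial.X - Polynomial.C b) ^ m) ≠ 0 := by
  let P : R[X] := ∑ j ∈ range (m + 1), Polynomial.monomial (m - j) (m.choose j * a j)
  have hcoeff : P.coeff (m - k) = m.choose k * a k := by
    rw [Polynomial.finsetSum_coeff, sum_eq_single_of_mem k (mem_range_succ_iff.mpr hk)]
    · exact Polynomial.coeff_monomial_same _ _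
    · intro j hj hjk
      have := mem_range_succ_iff.mp hj
      exact Polynomial.coeff_monomial_of_ne _ (by omega)
  have hP : P ≠ 0 := fun h => ha (by rw [← hcoeff, h, Polynomial.coeff_zero])
  obtain ⟨b, hb⟩ : ∃ b, P.eval b ≠ 0 := by
    by_contra! h
    exact hP (Polynomial.funext fun b => by rw [h b, Polynomial.eval_zero])
  refine ⟨-b, ?_⟩
  rw [map_neg, sub_neg_eq_add, momentFunctional_X_add_C_pow]
  simpa only [P, Polynomial.eval_finsetSum, Polynomial.eval_monomial] using hb

theorem nodal_univ_cons {R : Type*} [CommRing R] {n : ℕ} (s : R) (t : Fin n → R) :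
    Lagrange.nodal univ (Fin.cons s t : Fin (n + 1) → R) =
      (Polynomial.X - Polynomial.C s) * Lagrange.nodal univ t := by
  simp only [Lagrange.nodal, Fin.prod_univ_succ, Fin.cons_zero, Fin.cons_succ]

/-- The value of `momentFunctional a` at the monic polynomial whose roots are indexed by the
multiset `s`, as a polynomial in these roots: the roots are the variables `X i`, and an index
repeated in `s` is a repeated root. -/
def genericMoment {R ι : Type*} [CommRing R] (a : ℕ → R) (s : Multiset ι) : MvPolynomial ι R :=
  momentFunctional (fun k => C (a k)) (s.map fun i => Polynomial.X - Polynomial.C (X i)).prod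

theorem eval_genericMoment {R ι : Type*} [CommRing R] (a : ℕ → R) (s : Multiset ι) (t : ι → R) :
    eval t (genericMoment a s) =
      momentFunctional a (s.map fun i => Polynomial.X - Polynomial.C (t i)).prod := by
  simp only [genericMoment, map_momentFunctional, eval_C, Polynomial.map_multiset_prod,
    Multiset.map_map, Function.comp_def, Polynomial.map_sub, Polynomial.map_X, Polynomial.map_C,
    eval_X]

theorem genericMoment_ne_zero {R ι : Type*} [CommRing R] {a : ℕ → R} {s : Multiset ι}
    (h : ∃ b, momentFunctional a ((Polynomial.X - Polynomial.C b) ^ s.card) ≠ 0) :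
    genericMoment a s ≠ 0 := by
  obtain ⟨b, hb⟩ := h
  -- Let all roots collide at `b`.
  refine ne_of_apply_ne (eval fun _ => b) ?_
  rwa [eval_genericMoment, Multiset.map_const', Multiset.prod_replicate, map_zero]

theorem exists_injective_momentFunctional_nodal_ne_zero {R : Type*} [CommRing R] [IsDomain R]
    [Infinite R] {a : ℕ → R} {n : ℕ}
    (hn : ∃ b, momentFunctional a ((Polynomial.X - Polynomial.C b) ^ n) ≠ 0)
    (hn' : ∃ b, momentFunctional a ((Polynomial.X - Polynomial.C b) ^ (n + 1)) ≠ 0) :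
    ∃ t : Fin n → R, Function.Injective t ∧ momentFunctional a (Lagrange.nodal univ t) ≠ 0 ∧
      ∀ i, momentFunctional a
        ((Polynomial.X - Polynomial.C (t i)) * Lagrange.nodal univ t) ≠ 0 := by
  let V : MvPolynomial (Fin n) R := (Matrix.vandermonde X).det
  let H : MvPolynomial (Fin n) R := genericMoment a univ.val
  let Q (i : Fin n) : MvPolynomial (Fin n) R := genericMoment a (i ::ₘ univ.val)
  have hV : V ≠ 0 := Matrix.det_vandermonde_ne_zero_iff.mpr X_injective
  have hH : H ≠ 0 := genericMoment_ne_zero (by simpa using hn)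
  have hQ : ∏ i, Q i ≠ 0 :=
    prod_ne_zero_iff.mpr fun i _ => genericMoment_ne_zero (by simpa using hn')
  obtain ⟨t, ht⟩ : ∃ t, eval t (V * (H * ∏ i, Q i)) ≠ 0 := by
    by_contra! h
    exact mul_ne_zero hV (mul_ne_zero hH hQ) (MvPolynomial.funext fun t => by rw [h t, map_zero])
  rw [map_mul, map_mul, map_prod, mul_ne_zero_iff, mul_ne_zero_iff, prod_ne_zero_iff] at ht
  obtain ⟨htV, htH, htQ⟩ := ht
  refine ⟨t, Matrix.det_vandermonde_ne_zero_iff.mp ?_, ?_, fun i => ?_⟩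
  · simpa only [V, Matrix.det_vandermonde, map_prod, map_sub, eval_X] using htV
  · rwa [eval_genericMoment] at htH
  · have htQi := htQ i (mem_univ i)
    rwa [eval_genericMoment, Multiset.map_cons, Multiset.prod_cons] at htQi

theorem exists_injective_momentFunctional_nodal_eq_zero {K : Type*} [Field K] [Infinite K]
    {a : ℕ → K} {n : ℕ} (hn : ∃ b, momentFunctional a ((Polynomial.X - Polynomial.C b) ^ n) ≠ 0)
    (hn' : ∃ b, momentFunctional a ((Polynomial.X - Polynomial.C b) ^ (n + 1)) ≠ 0) :
    ∃ t : Fin (n + 1) → K,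
      Function.Injective t ∧ momentFunctional a (Lagrange.nodal univ t) = 0 := by
  obtain ⟨t, ht, hH, hQ⟩ := exists_injective_momentFunctional_nodal_ne_zero hn hn'
  set H := Lagrange.nodal univ t
  let s := momentFunctional a (Polynomial.X * H) / momentFunctional a H
  have hs : momentFunctional a ((Polynomial.X - Polynomial.C s) * H) = 0 := by
    rw [sub_mul, map_sub, momentFunctional_C_mul, div_mul_cancel₀ _ hH, sub_self]
  refine ⟨Fin.cons s t, Fin.cons_injective_iff.mpr ⟨?_, ht⟩, by rwa [nodal_univ_cons]⟩
  rintro ⟨i, hi⟩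
  exact hQ i (hi ▸ hs)

theorem exists_weights_of_momentFunctional_nodal_eq_zero {K ι : Type*} [Field K] {a : ℕ → K}
    {s : Finset ι} {t : ι → K} (ht : Set.InjOn t s)
    (h : momentFunctional a (Lagrange.nodal s t) = 0) :
    ∃ c : ι → K, ∀ p : K[X], p.natDegree ≤ #s →
      momentFunctional a p = ∑ i ∈ s, c i * p.eval (t i) := by
  classical
  refine ⟨fun i => momentFunctional a (Lagrange.basis s t i), fun p hp => ?_⟩
  set N := Lagrange.nodal s t
  have hN : N.Monic := Lagrange.nodal_monic
  have hdiv : p /ₘ N = Polynomial.C ((p /ₘ N).coeff 0) := by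
    apply Polynomial.eq_C_of_natDegree_eq_zero
    rw [Polynomial.natDegree_divByMonic _ hN, Lagrange.natDegree_nodal, Nat.sub_eq_zero_of_le hp]
  have hmod : momentFunctional a p = momentFunctional a (p %ₘ N) := by
    conv_lhs => rw [← Polynomial.modByMonic_add_div p N, hdiv, mul_comm]
    rw [map_add, momentFunctional_C_mul, h, mul_zero, add_zero]
  have hinterp : p %ₘ N = Lagrange.interpolate s t fun i => (p %ₘ N).eval (t i) :=
    Lagrange.eq_interpolate ht
      ((Polynomial.degree_modByMonic_lt p hN).trans_eq Lagrange.degree_nodal)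
  have heval {i} (hi : i ∈ s) : (p %ₘ N).eval (t i) = p.eval (t i) :=
    Polynomial.aeval_modByMonic_eq_self_of_root (Lagrange.eval_nodal_at_node hi)
  rw [hmod, hinterp, Lagrange.interpolate_apply, map_sum]
  refine sum_congr rfl fun i hi => ?_
  rw [momentFunctional_C_mul, heval hi, mul_comm]

theorem exists_eq_sum_mul_pow {K : Type*} [Field K] [Infinite K] {a : ℕ → K} {n k : ℕ}
    (hfact : ((n + 1)! : K) ≠ 0) (hk : k ≤ n) (ha : a k ≠ 0) :
    ∃ c t : Fin (n + 1) → K, ∀ k ≤ n + 1, a k = ∑ i, c i * t i ^ k := by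
  have hgeneric {m : ℕ} (hm : m ≤ n + 1) (hkm : k ≤ m) :=
    exists_momentFunctional_X_sub_C_pow_ne_zero hkm
      (mul_ne_zero (natCast_choose_ne_zero hfact hm hkm) ha)
  obtain ⟨t, ht, hker⟩ := exists_injective_momentFunctional_nodal_eq_zero
    (hgeneric n.le_succ hk) (hgeneric le_rfl (hk.trans n.le_succ))
  obtain ⟨c, hc⟩ := exists_weights_of_momentFunctional_nodal_eq_zero ht.injOn hker
  refine ⟨c, t, fun k hk => ?_⟩
  rw [← momentFunctional_X_pow a k, hc _ (by simpa using hk)]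
  simp only [Polynomial.eval_pow, Polynomial.eval_X]

end MomentFunctional

theorem exists_eq_sum_C_mul_X_pow_mul_X_pow {R : Type*} [CommSemiring R] {d : ℕ}
    {q : MvPolynomial (Fin 2) R} (hq : q.IsHomogeneous d) :
    ∃ c : ℕ → R, q = ∑ k ∈ range (d + 1), C (c k) * (X 0 ^ k * X 1 ^ (d - k)) := by
  let p : R[X] := aeval ![Polynomial.X, 1] q
  refine ⟨p.coeff, ?_⟩
  rw [← Polynomial.homogenize_eq_of_isHomogeneous hq rfl, Polynomial.homogenize,
    Nat.sum_antidiagonal_eq_sum_range_succ_mk]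
  refine sum_congr rfl fun k hk => ?_
  rw [← Polynomial.homogenize_X_pow (mem_range_succ_iff.mp hk), ← Polynomial.homogenize_C_mul,
    Polynomial.C_mul_X_pow_eq_monomial, Polynomial.homogenize_monomial (mem_range_succ_iff.mp hk)]

section LinForm

variable {K : Type} [Field K]

theorem exists_linForm_pow_eq_C_mul {d : ℕ} {c : K} (hc : ∃ z, z ^ d = c) (v : Fin 2 → K) :
    ∃ w, linForm K w ^ d = C c * linForm K v ^ d := by
  obtain ⟨z, rfl⟩ := hc
  refine ⟨z • v, ?_⟩
  rw [map_pow, ← mul_pow]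
  simp only [linForm, Pi.smul_apply, smul_eq_mul, map_mul]
  ring

theorem linForm_pow_eq_sum (t : K) (d : ℕ) :
    linForm K ![t, 1] ^ d =
      ∑ k ∈ range (d + 1), C (d.choose k * t ^ k) * (X 0 ^ k * X 1 ^ (d - k)) := by
  simp only [linForm, Matrix.cons_val_zero, Matrix.cons_val_one, map_one, one_mul, add_pow]
  refine sum_congr rfl fun k _ => ?_
  simp only [map_mul, map_pow, map_natCast]
  ring

theorem sum_C_mul_linForm_pow {ι : Type*} (s : Finset ι) (c t : ι → K) (d : ℕ) :
    ∑ i ∈ s, C (c i) * linForm K ![t i, 1] ^ d =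
      ∑ k ∈ range (d + 1),
        C (d.choose k * ∑ i ∈ s, c i * t i ^ k) * (X 0 ^ k * X 1 ^ (d - k)) := by
  simp only [linForm_pow_eq_sum, mul_sum, map_sum, sum_mul]
  rw [sum_comm]
  refine sum_congr rfl fun k _ => sum_congr rfl fun i _ => ?_
  simp only [map_mul]
  ring

theorem exists_eq_sum_C_mul_linForm_pow [Infinite K] {d : ℕ} (hd : d ≠ 0) (hfact : (d ! : K) ≠ 0)
    {q : MvPolynomial (Fin 2) K} (hq : q.IsHomogeneous d) :
    ∃ (c : Fin d → K) (L : Fin d → Fin 2 → K), q = ∑ i, C (c i) * linForm K (L i) ^ d := by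
  obtain ⟨n, rfl⟩ := Nat.exists_eq_succ_of_ne_zero hd
  obtain ⟨b, rfl⟩ := exists_eq_sum_C_mul_X_pow_mul_X_pow hq
  by_cases hb : ∃ k ≤ n, b k ≠ 0
  · obtain ⟨k, hk, hbk⟩ := hb
    have hchoose {j : ℕ} (hj : j ≤ n + 1) := natCast_choose_ne_zero hfact le_rfl hj
    obtain ⟨c, t, hct⟩ := exists_eq_sum_mul_pow (a := fun k => b k / (n + 1).choose k) hfact hk
      (div_ne_zero hbk (hchoose (hk.trans n.le_succ)))
    refine ⟨c, fun i => ![t i, 1], ?_⟩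
    rw [sum_C_mul_linForm_pow]
    refine sum_congr rfl fun k hk => ?_
    have hk := mem_range_succ_iff.mp hk
    rw [← hct k hk, mul_div_cancel₀ _ (hchoose hk)]
  · push Not at hb
    refine ⟨Pi.single 0 (b (n + 1)), fun _ => ![1, 0], ?_⟩
    have hlow : ∑ k ∈ range (n + 1), C (b k) * (X 0 ^ k * X 1 ^ (n + 1 - k)) =
        (0 : MvPolynomial (Fin 2) K) :=
      sum_eq_zero fun k hk => by rw [hb k (mem_range_succ_iff.mp hk), map_zero, zero_mul]
    rw [sum_range_succ, hlow, Fin.sum_univ_succ]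
    simp [linForm]

theorem exists_eq_sum_linForm_pow [Infinite K] {d : ℕ} (hd : d ≠ 0) (hfact : (d ! : K) ≠ 0)
    (hroot : ∀ c : K, ∃ z, z ^ d = c) {q : MvPolynomial (Fin 2) K} (hq : q.IsHomogeneous d) :
    ∃ L : Fin d → Fin 2 → K, q = ∑ i, linForm K (L i) ^ d := by
  obtain ⟨c, v, rfl⟩ := exists_eq_sum_C_mul_linForm_pow hd hfact hq
  choose L hL using fun i => exists_linForm_pow_eq_C_mul (hroot (c i)) (v i)
  exact ⟨L, sum_congr rfl fun i _ => (hL i).symm⟩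

/-- The derivation `w₀ ∂/∂x + w₁ ∂/∂y` of binary forms: differentiation in the direction `w`. -/
def dirDeriv (w : Fin 2 → K) : Derivation K (MvPolynomial (Fin 2) K) (MvPolynomial (Fin 2) K) :=
  mkDerivation K fun i => C (w i)

theorem dirDeriv_linForm_pow_succ (w v : Fin 2 → K) (m : ℕ) :
    dirDeriv w (linForm K v ^ (m + 1)) =
      C ((m + 1 : ℕ) * (v 0 * w 0 + v 1 * w 1)) * linForm K v ^ m := by
  have hlin : dirDeriv w (linForm K v) = C (v 0 * w 0 + v 1 * w 1) := by
    simp [linForm, dirDeriv]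
  rw [Derivation.leibniz_pow, hlin, Nat.add_sub_cancel]
  simp only [nsmul_eq_mul, smul_eq_mul, map_mul, map_natCast]
  ring

theorem dirDeriv_C_mul_linForm_pow_succ (w v : Fin 2 → K) (c : K) (m : ℕ) :
    dirDeriv w (C c * linForm K v ^ (m + 1)) =
      C (c * ((m + 1 : ℕ) * (v 0 * w 0 + v 1 * w 1))) * linForm K v ^ m := by
  rw [C_mul', Derivation.map_smul, dirDeriv_linForm_pow_succ, ← C_mul', ← mul_assoc, ← map_mul]

theorem linForm_ne_zero {v : Fin 2 → K} (hv : v ≠ 0) : linForm K v ≠ 0 := by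
  contrapose! hv
  ext i
  have heval := congrArg (eval (Pi.single i 1)) hv
  fin_cases i <;> simpa [linForm] using heval

theorem eq_zero_of_C_mul_linForm_pow_eq_sum {ι : Type*} {s : Finset ι} {m : ℕ} {u : Fin 2 → K}
    {v : ι → Fin 2 → K} {b : K} {c : ι → K} (hs : #s ≤ m) (hfact : (m ! : K) ≠ 0) (hu : u ≠ 0)
    (hv : ∀ i ∈ s, u 0 * v i 1 ≠ u 1 * v i 0)
    (h : C b * linForm K u ^ m = ∑ i ∈ s, C (c i) * linForm K (v i) ^ m) : b = 0 := by
  induction s using Finset.cons_induction generalizing m b c with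
  | empty =>
    rw [sum_empty, mul_eq_zero, or_iff_left (pow_ne_zero m (linForm_ne_zero hu))] at h
    exact C_eq_zero.mp h
  | cons j s hj ih =>
    rw [card_cons] at hs
    obtain ⟨n, rfl⟩ := Nat.exists_eq_add_of_lt (Nat.lt_of_lt_of_le (Nat.succ_pos _) hs)
    rw [zero_add] at h hs hfact
    rw [Nat.factorial_succ, Nat.cast_mul, mul_ne_zero_iff] at hfact
    rw [forall_mem_cons] at hv
    let w : Fin 2 → K := ![v j 1, -v j 0]
    have hj : v j 0 * w 0 + v j 1 * w 1 = 0 := by simp [w, mul_comm]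
    have hderiv := congrArg (dirDeriv w) h
    simp only [sum_cons, map_add, map_sum, dirDeriv_C_mul_linForm_pow_succ, hj, mul_zero,
      map_zero, zero_mul, zero_add] at hderiv
    have hzero : b * ((n + 1 : ℕ) * (u 0 * w 0 + u 1 * w 1)) = 0 :=
      ih (Nat.le_of_succ_le_succ hs) hfact.2 hv.2 hderiv
    have hu : u 0 * w 0 + u 1 * w 1 ≠ 0 := by
      simpa [w, ← sub_eq_add_neg, sub_eq_zero] using hv.1
    exact (mul_eq_zero_iff_right (mul_ne_zero hfact.1 hu)).mp hzero

theorem le_of_X_pow_mul_X_eq_sum_linForm_pow {n r : ℕ} (hfact : (n ! : K) ≠ 0)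
    {L : Fin r → Fin 2 → K}
    (h : (X 0 : MvPolynomial (Fin 2) K) ^ n * X 1 = ∑ i, linForm K (L i) ^ (n + 1)) :
    n + 1 ≤ r := by
  classical
  by_contra! hr
  let s : Finset (Fin r) := {i | L i 1 ≠ 0}
  let c (i : Fin r) : K := (n + 1 : ℕ) * L i 1
  have hleft : dirDeriv ![0, 1] ((X 0 : MvPolynomial (Fin 2) K) ^ n * X 1) =
      C 1 * linForm K ![1, 0] ^ n := by
    simp [dirDeriv, linForm, Derivation.leibniz_pow]
  have hright : dirDeriv ![0, 1] (∑ i, linForm K (L i) ^ (n + 1)) =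
      ∑ i ∈ s, C (c i) * linForm K (L i) ^ n := by
    rw [map_sum, sum_filter_of_ne]
    · simp only [c, dirDeriv_linForm_pow_succ, Matrix.cons_val_zero, Matrix.cons_val_one,
        mul_zero, mul_one, zero_add]
    · intro i _ hi hLi
      simp [c, hLi] at hi
  have hs : #s ≤ n := (card_le_univ s).trans (by simpa using Nat.le_of_lt_succ hr)
  exact one_ne_zero <| eq_zero_of_C_mul_linForm_pow_eq_sum hs hfact (by simp) (by simp [s])
    (hleft.symm.trans ((congrArg _ h).trans hright))

end LinForm

theorem stmt19_general (K : Type) [Field K] [Infinite K] (d : ℕ) (hd : d ≠ 0)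
    (hfact : (d ! : K) ≠ 0) (hroot : ∀ c : K, ∃ z, z ^ d = c) :
    (∀ q : MvPolynomial (Fin 2) K, q.IsHomogeneous d →
      ∃ L : Fin d → Fin 2 → K, q = ∑ i, linForm K (L i) ^ d) ∧
    waringRank K d ((X 0 : MvPolynomial (Fin 2) K) ^ (d - 1) * X 1) = d := by
  have upper {q : MvPolynomial (Fin 2) K} (hq : q.IsHomogeneous d) :=
    exists_eq_sum_linForm_pow hd hfact hroot hq
  refine ⟨fun q hq => upper hq, ?_⟩
  obtain ⟨n, rfl⟩ := Nat.exists_eq_succ_of_ne_zero hd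
  have hmem := upper ((isHomogeneous_X_pow (0 : Fin 2) n).mul (isHomogeneous_X K 1))
  refine le_antisymm (Nat.sInf_le hmem) (le_csInf ⟨_, hmem⟩ ?_)
  rintro r ⟨L, hL⟩
  have hfact' : (n ! : K) ≠ 0 :=
    ne_zero_of_dvd_ne_zero hfact (Nat.cast_dvd_cast (Nat.factorial_dvd_factorial n.le_succ))
  exact le_of_X_pow_mul_X_eq_sum_linForm_pow hfact' hL

/-- Every binary form of degree `d` is a sum of `d` `d`-th powers of linear forms, and the
bound is attained: `x^{d-1}y` has Waring rank exactly `d`. -/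
theorem stmt19 (K : Type) [Field K] [IsAlgClosed K] [CharZero K] (d : ℕ) (hd : 2 ≤ d) :
    (∀ q : MvPolynomial (Fin 2) K, q.IsHomogeneous d →
      ∃ L : Fin d → Fin 2 → K, q = ∑ i, linForm K (L i) ^ d) ∧
    waringRank K d ((X 0 : MvPolynomial (Fin 2) K) ^ (d - 1) * X 1) = d :=
  stmt19_general K d (by omega) (Nat.cast_ne_zero.mpr d.factorial_ne_zero) fun c =>
    IsAlgClosed.exists_pow_nat_eq c (by omega)
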